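/- Let {a,b,c,d} = Σ and let q be an n-quasigroup of order 4 (n ≥ 3). If there exist more than two n-quasigroups f satisfying f(x̄) = q(x̄) for every x̄ ∈ Σ^n whose last coordinate lies in {a,b}, then q is semilinear or decomposable. -/

import Mathlib

/-- The alphabet `Σ = {0,1,2,3}`. -/
abbrev V4 := Fin 4

/-- An `n`-quasigroup of order 4. -/
def IsNQuasigroup {n : ℕ} (f : (Fin n → V4) → V4) : Prop :=
  ∀ (a : Fin n → V4) (i : Fin n) (b : V4),
    ∃! x : V4, f (Function.update a i x) = b

/-- `S_{a,b}(f)`. -/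
def SCode {n : ℕ} (f : (Fin n → V4) → V4) (a b : V4) : Set (Fin n → V4) :=
  {x | f x = a ∨ f x = b}

/-- A linear double-code. -/
def IsLinearDoubleCode {n : ℕ} (S : Set (Fin n → V4)) : Prop :=
  ∃ T : Fin n → Finset V4, (∀ i, (T i).card = 2) ∧
    ∀ x : Fin n → V4, x ∈ S ↔ (∑ i, if x i ∈ T i then (1 : ZMod 2) else 0) = 1

/-- A semilinear `n`-quasigroup. -/
def IsSemilinear {n : ℕ} (f : (Fin n → V4) → V4) : Prop :=
  ∃ a b : V4, a ≠ b ∧ IsLinearDoubleCode (SCode f a b)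

/-- A decomposable `n`-quasigroup:
`f(x₁,…,xₙ) = h(g(x_{σ(1)},…,x_{σ(m)}), x_{σ(m+1)},…,x_{σ(n)})` for some
`2 ≤ m < n`, an `(n−m+1)`-quasigroup `h`, an `m`-quasigroup `g` and a
permutation `σ`. -/
def IsDecomposable {n : ℕ} (f : (Fin n → V4) → V4) : Prop :=
  ∃ (m : ℕ) (_ : 2 ≤ m) (hm : m < n)
    (h : (Fin (n - m + 1) → V4) → V4) (g : (Fin m → V4) → V4)
    (σ : Equiv.Perm (Fin n)),
    IsNQuasigroup h ∧ IsNQuasigroup g ∧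
    ∀ x : Fin n → V4,
      f x = h (Fin.cons (g fun j => x (σ ⟨j.1, j.2.trans hm⟩))
        (fun j : Fin (n - m) => x (σ ⟨m + j.1, by have := j.2; omega⟩)))

/-!
Solve `q x = y` for the last argument: the solution is a quasigroup `p`, and an extension `f` of
the restriction of `q` has the same points where the solution lies in `{c, d}`, so the indicator
`F` of `{c, d}` composed with `p` is common to all extensions. Each line meets each level set of
`F` in two points, and along a line `p` switches between the two symbols of a level; hence an
extension is determined, on each connected component of the level set `F = 1`, by its value at one
point. More than two extensions therefore force a level set to be disconnected.

Say that two coordinates interact if `F` is not additive in them. A two-dimensional plane in which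
points of equal level cannot be joined has complementary rows, and this property passes to all
parallel planes, so its two coordinates do not interact. It follows that the level sets are
connected inside every connected component of the interaction graph. If no coordinates interact
then `F` is a sum of functions of one variable and `q` is semilinear. Otherwise a component `I`
with an interacting pair is a proper set of coordinates, and counting the parity of the steps of
level paths shows that whether a change of the arguments in `I` preserves `p` does not depend on
the other arguments. This makes `p`, and then `q`, decomposable.
-/

open Function Relation

section Interaction

variable {ι α A : Type*} [DecidableEq ι]

theorem update_induction [Finite ι] {P : (ι → α) → Prop} {x y : ι → α}
    (hP : ∀ i, x i ≠ y i → ∀ z, P z → P (update z i (y i))) (hx : P x) : P y := by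
  have := Fintype.ofFinite ι
  suffices ∀ s : Finset ι, P (s.piecewise y x) by simpa using this Finset.univ
  intro s
  induction s using Finset.induction_on with
  | empty => simpa using hx
  | insert k s hk ih =>
    rw [Finset.piecewise_insert]
    by_cases hxy : x k = y k
    · have hsame : y k = s.piecewise y x k := by simp [hk, hxy]
      rwa [hsame, update_eq_self]
    · exact hP k hxy _ ih

variable [AddCommGroup A]

/-- The increments of `F` along coordinate `j` do not depend on coordinate `i`. The relation is
symmetric in `i` and `j`, and it holds trivially for `i = j`. -/
def NonInteracting (F : (ι → α) → A) (i j : ι) : Prop :=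
  ∀ x a b b', F (update (update x i a) j b) - F (update (update x i a) j b') =
    F (update x j b) - F (update x j b')

/-- The connected component of `i` in the graph joining the interacting pairs of coordinates. -/
def interactionComponent (F : (ι → α) → A) (i : ι) : Set ι :=
  {k | ReflTransGen (fun j k => ¬ NonInteracting F j k) i k}

variable {F : (ι → α) → A} {i j k : ι}

theorem nonInteracting_self (F : (ι → α) → A) (i : ι) : NonInteracting F i i := by
  intro x a b b'
  simp only [update_idem]

theorem NonInteracting.symm (h : NonInteracting F i j) : NonInteracting F j i := by
  obtain rfl | hij := eq_or_ne i j
  · exact h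
  intro x a b b'
  have hb := h x b a (x j)
  have hb' := h x b' a (x j)
  simp only [← update_comm hij.symm, update_eq_self] at hb hb'
  rw [sub_eq_sub_iff_sub_eq_sub]
  exact hb.trans hb'.symm

theorem update_sub_update_eq_of_nonInteracting [Finite ι] {x y : ι → α}
    (h : ∀ k, x k ≠ y k → NonInteracting F k i) (a b : α) :
    F (update x i a) - F (update x i b) = F (update y i a) - F (update y i b) :=
  update_induction (P := fun z => F (update x i a) - F (update x i b) =
    F (update z i a) - F (update z i b)) (fun k hk z hz => hz.trans (h k hk z _ a b).symm) rfl

theorem eq_add_sum_of_nonInteracting [Fintype ι] (h : ∀ i j, NonInteracting F i j)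
    (x z : ι → α) : F x = F z + ∑ i, (F (update z i (x i)) - F z) := by
  suffices ∀ s : Finset ι,
      F (s.piecewise x z) = F z + ∑ i ∈ s, (F (update z i (x i)) - F z) by
    simpa using this Finset.univ
  intro s
  induction s using Finset.induction_on with
  | empty => simp
  | insert k s hk ih =>
    have hstep := update_sub_update_eq_of_nonInteracting (F := F) (i := k) (x := s.piecewise x z)
      (y := z) (fun l _ => h l k) (x k) (z k)
    have hzk : z k = s.piecewise x z k := by simp [hk]
    rw [update_eq_self, hzk, update_eq_self] at hstep
    rw [Finset.piecewise_insert, Finset.sum_insert hk, add_left_comm, ← ih, ← hstep,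
      sub_add_cancel]

theorem nonInteracting_of_mem_of_notMem_interactionComponent
    (hj : j ∈ interactionComponent F i) (hk : k ∉ interactionComponent F i) :
    NonInteracting F k j := by
  by_contra h
  exact hk (ReflTransGen.tail hj fun hjk => h hjk.symm)

theorem piecewise_update_of_mem {I : Set ι} [∀ j, Decidable (j ∈ I)] (hi : i ∈ I) (x y : ι → α)
    (a : α) : I.piecewise (update x i a) y = update (I.piecewise x y) i a := by
  funext j
  obtain rfl | hji := eq_or_ne j i
  · simp [hi]
  · simp [Set.piecewise, hji]

open scoped Classical in
theorem apply_piecewise_eq_of_mem_interactionComponent [Finite ι] {x : ι → α} {a : α}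
    (hj : j ∈ interactionComponent F i) (h : F x = F (update x j a)) (y : ι → α) :
    F ((interactionComponent F i).piecewise x y) =
      F ((interactionComponent F i).piecewise (update x j a) y) := by
  have hincr := update_sub_update_eq_of_nonInteracting (F := F) (i := j) (x := x)
    (y := (interactionComponent F i).piecewise x y)
    (fun k hk => nonInteracting_of_mem_of_notMem_interactionComponent hj
      fun hkI => hk (Set.piecewise_eq_of_mem _ _ _ hkI).symm) (x j) a
  rw [update_eq_self, sub_eq_zero.2 h, ← piecewise_update_of_mem hj, update_eq_self,
    ← piecewise_update_of_mem hj] at hincr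
  exact sub_eq_zero.1 hincr.symm

end Interaction

section LevelConnectivity

variable {ι α A : Type*} [DecidableEq ι] {F : (ι → α) → A} {I : Set ι} {x y z : ι → α}

/-- `x` and `y` are joined by a path inside a level set of `F` whose steps each change one
coordinate belonging to `I`. -/
def LevelConn (F : (ι → α) → A) (I : Set ι) : (ι → α) → (ι → α) → Prop :=
  ReflTransGen fun x y => F x = F y ∧ ∃ i ∈ I, ∃ a, y = update x i a

theorem LevelConn.trans (hxy : LevelConn F I x y) (hyz : LevelConn F I y z) :
    LevelConn F I x z :=
  ReflTransGen.trans hxy hyz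

theorem LevelConn.symm (h : LevelConn F I x y) : LevelConn F I y x := by
  induction h with
  | refl => exact .refl
  | @tail y _ _ hstep ih =>
    obtain ⟨hF, i, hi, a, rfl⟩ := hstep
    exact .head ⟨hF.symm, i, hi, y i, by simp⟩ ih

theorem levelConn_update_update {i : ι} (hi : i ∈ I) {a b : α}
    (h : F (update x i a) = F (update x i b)) :
    LevelConn F I (update x i a) (update x i b) :=
  ReflTransGen.single ⟨h, i, hi, b, by simp⟩

/-- All points of equal level in the plane through `x` spanned by the coordinates `i` and `j` are
`LevelConn`-related. -/
def PlaneConn (F : (ι → α) → A) (I : Set ι) (i j : ι) (x : ι → α) : Prop :=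
  ∀ a a' b b', F (update (update x i a) j b) = F (update (update x i a') j b') →
    LevelConn F I (update (update x i a) j b) (update (update x i a') j b')

end LevelConnectivity

section DoubleCode

/-- A two-valued function on the alphabet that takes each of its values twice. -/
abbrev IsBalanced (f : V4 → ZMod 2) : Prop :=
  (Finset.univ.filter fun c => f c = 1).card = 2

theorem IsBalanced.exists_eq_and_eq {f g : V4 → ZMod 2} (hf : IsBalanced f) (hg : IsBalanced g)
    {e : V4} (he : f e = g e) (v : ZMod 2) : ∃ c, f c = v ∧ g c = v := by
  revert f g e v
  decide

theorem IsBalanced.exists_eq {f : V4 → ZMod 2} (hf : IsBalanced f) (v : ZMod 2) :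
    ∃ c, f c = v :=
  (hf.exists_eq_and_eq hf (e := 0) rfl v).imp fun _ => And.left

theorem IsBalanced.eq_of_eq {f g : V4 → ZMod 2} (hf : IsBalanced f) (hg : IsBalanced g)
    {e a : V4} (h : ∀ c, f c = f a → g c = g a) (he : g e = g a) : f e = f a := by
  revert f g e a
  decide

theorem eq_of_ne_of_ne {u v w : ZMod 2} (hu : u ≠ w) (hv : v ≠ w) : u = v := by
  revert u v w
  decide

variable {ι : Type*} [DecidableEq ι]

/-- `F` is the indicator function of a double-code: a set that meets every axis-parallel line in
exactly two points. -/
def IsDoubleCode (F : (ι → V4) → ZMod 2) : Prop :=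
  ∀ x i, IsBalanced fun c => F (update x i c)

variable {F : (ι → V4) → ZMod 2} {I : Set ι} {x y : ι → V4} {i j k : ι}

theorem LevelConn.update_update (hF : IsDoubleCode F) (hi : i ∈ I) (h : LevelConn F I x y)
    {a b : V4} (hab : F (update x i a) = F (update y i b)) :
    LevelConn F I (update x i a) (update y i b) := by
  induction h generalizing b with
  | refl => exact levelConn_update_update hi hab
  | @tail y _ _ hstep ih =>
    obtain ⟨hlevel, k, hk, e, rfl⟩ := hstep
    obtain rfl | hik := eq_or_ne i k
    · simp only [update_idem] at hab ⊢
      exact ih hab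
    · have hbase : F (update y i (y i)) = F (update (update y k e) i (y i)) := by
        rwa [update_comm hik.symm, update_eq_self]
      obtain ⟨c, hyc, hzc⟩ := (hF y i).exists_eq_and_eq (hF (update y k e) i) hbase
        (F (update x i a))
      have hcross : LevelConn F I (update y i c) (update (update y k e) i c) :=
        .single ⟨hyc.trans hzc.symm, k, hk, e, update_comm hik.symm ..⟩
      exact (ih hyc.symm).trans (hcross.trans (levelConn_update_update hi (hzc.trans hab)))

theorem LevelConn.update_of_notMem (hI : ∀ i ∈ I, NonInteracting F k i) (hk : k ∉ I)
    (h : LevelConn F I x y) (t : V4) : LevelConn F I (update x k t) (update y k t) := by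
  induction h with
  | refl => exact .refl
  | @tail y _ _ hstep ih =>
    obtain ⟨hlevel, i, hi, e, rfl⟩ := hstep
    have hik : i ≠ k := fun h => hk (h ▸ hi)
    have hshift := hI i hi y t (y i) e
    rw [update_eq_self, ← hlevel, sub_self, sub_eq_zero, update_comm hik.symm, update_eq_self]
      at hshift
    exact ih.tail ⟨by rw [hshift, update_comm hik], i, hi, e, update_comm hik ..⟩

theorem LevelConn.of_update (hF : IsDoubleCode F)
    (hI : ∀ i ∈ I, ∀ k ∉ I, NonInteracting F k i) {t : V4}
    (h : LevelConn F I (update x k t) (update y k t)) (hxy : F x = F y) (hk : x k = y k) :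
    LevelConn F I x y := by
  by_cases hkI : k ∈ I
  · simpa using h.update_update hF hkI (a := x k) (b := y k) (by simpa using hxy)
  · have hback := h.update_of_notMem (fun i hi => hI i hi k hkI) hkI (x k)
    rwa [update_idem, update_idem, update_eq_self, hk, update_eq_self] at hback

/-- Two rows of a plane that agree somewhere are joined by a step there, and then by
`LevelConn.update_update` at all points of equal level. -/
theorem levelConn_rows_of_exists_eq (hF : IsDoubleCode F) (hi : i ∈ I) (hj : j ∈ I)
    {a a' : V4} (h : ∃ s, F (update (update x i a) j s) = F (update (update x i a') j s))
    {b b' : V4} (hb : F (update (update x i a) j b) = F (update (update x i a') j b')) :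
    LevelConn F I (update (update x i a) j b) (update (update x i a') j b') := by
  obtain rfl | hij := eq_or_ne i j
  · simp only [update_idem] at hb ⊢
    exact levelConn_update_update hi hb
  obtain ⟨s, hs⟩ := h
  have hcol : LevelConn F I (update (update x i a) j s) (update (update x i a') j s) := by
    simp only [update_comm hij] at hs ⊢
    exact levelConn_update_update hi hs
  simpa using hcol.update_update hF hj (a := b) (b := b') (by simpa using hb)

/-- Two rows of the plane are not connected, so they are complementary; every other row is
complementary to one of these two. -/
theorem increments_eq_of_not_planeConn (hF : IsDoubleCode F) (hi : i ∈ I) (hj : j ∈ I)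
    (h : ¬ PlaneConn F I i j x) (r r' s s' : V4) :
    F (update (update x i r) j s) - F (update (update x i r) j s') =
      F (update (update x i r') j s) - F (update (update x i r') j s') := by
  simp only [PlaneConn, not_forall] at h
  obtain ⟨a, a', b, b', hlevel, hsep⟩ := h
  have hrow (r : V4) :
      ∃ t, ∀ s, F (update (update x i r) j s) = F (update (update x i a) j s) + t := by
    have hcompl : ∀ s, F (update (update x i a) j s) ≠ F (update (update x i a') j s) := by
      by_contra! hs
      exact hsep (levelConn_rows_of_exists_eq hF hi hj hs hlevel)
    by_cases ha : ∃ s, F (update (update x i r) j s) = F (update (update x i a) j s)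
    · by_cases ha' : ∃ s, F (update (update x i r) j s) = F (update (update x i a') j s)
      · obtain ⟨s, hs⟩ := (hF (update x i r) j).exists_eq (F (update (update x i a) j b))
        exact absurd ((levelConn_rows_of_exists_eq hF hi hj ha hs).symm.trans
          (levelConn_rows_of_exists_eq hF hi hj ha' (hs.trans hlevel))) hsep
      · push Not at ha'
        exact ⟨0, fun s => by rw [add_zero]; exact eq_of_ne_of_ne (ha' s) (hcompl s)⟩
    · push Not at ha
      refine ⟨1, fun s => eq_of_ne_of_ne (ha s) ?_⟩
      simp
  obtain ⟨t, ht⟩ := hrow r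
  obtain ⟨t', ht'⟩ := hrow r'
  simp only [ht, ht', add_sub_add_right_eq_sub]

theorem update_update_ne_of_not_levelConn (hF : IsDoubleCode F) (hi : i ∈ I) (hik : i ≠ k)
    {p p' : ι → V4} {t e : V4} (hlevel : F p = F p') (hsep : ¬ LevelConn F I p p')
    (hne : ∀ c, F (update p i c) = F p' → ¬ LevelConn F I (update p i c) p' →
      F (update (update p i c) k t) ≠ F (update p' k t))
    (he : F (update p i e) ≠ F p) : F (update (update p i e) k t) ≠ F (update p k t) := by
  have hline (c : V4) : update (update p i c) k t = update (update p k t) i c :=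
    update_comm hik ..
  have hneighbour (c : V4) (hc : F (update p i c) = F (update p i (p i))) :
      F (update (update p k t) i c) ≠ F (update p' k t) := by
    have hstep := levelConn_update_update hi hc
    rw [update_eq_self] at hc hstep
    exact hline c ▸ hne c (hc.trans hlevel) fun h => hsep (hstep.symm.trans h)
  have hp := hneighbour (p i) rfl
  have hflip := mt ((hF p i).eq_of_eq (hF (update p k t) i) (e := e) (a := p i)
    fun c hc => eq_of_ne_of_ne (hneighbour c hc) hp) (by rwa [update_eq_self])
  rwa [← hline (p i), update_eq_self, ← hline] at hflip

/-- If opposite corners of the plane through `x` are not connected but the parallel plane is, then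
each disconnected pair of equal level acquires different levels in the parallel plane. Balancedness
of the two lines through a corner makes this impossible for both diagonals at once. -/
theorem PlaneConn.of_update (hF : IsDoubleCode F)
    (hI : ∀ i ∈ I, ∀ k ∉ I, NonInteracting F k i) (hi : i ∈ I) (hj : j ∈ I) (hij : i ≠ j)
    {t : V4} (h : PlaneConn F I i j (update x k t)) : PlaneConn F I i j x := by
  obtain rfl | hki := eq_or_ne k i
  · simpa only [PlaneConn, update_idem] using h
  obtain rfl | hkj := eq_or_ne k j
  · simpa only [PlaneConn, update_comm hij, update_idem] using h
  intro a a' b b' hdiag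
  by_contra hsep
  simp only [PlaneConn, update_comm hki, update_comm hkj] at h
  set P : V4 → V4 → ι → V4 := fun r s => update (update x i r) j s with hP
  have hPi (r s c : V4) : update (P r s) i c = P c s := by
    simp only [hP, update_comm hij, update_idem]
  have hPj (r s c : V4) : update (P r s) j c = P r c := update_idem ..
  have hne {r r' s s' : V4} (hFeq : F (P r s) = F (P r' s'))
      (hconn : ¬ LevelConn F I (P r s) (P r' s')) :
      F (update (P r s) k t) ≠ F (update (P r' s') k t) := fun hFk =>
    hconn ((h r r' s s' hFk).of_update hF hI hFeq (by simp [P, hki, hkj]))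
  have hcompl (s : V4) : F (P a s) ≠ F (P a' s) := fun hs =>
    hsep (levelConn_rows_of_exists_eq hF hi hj ⟨s, hs⟩ hdiag)
  have hcol : F (update (P a' b) k t) ≠ F (update (P a b) k t) := by
    rw [← hPi a b a']
    refine update_update_ne_of_not_levelConn hF hi hki.symm hdiag hsep (fun c => ?_) ?_
    · simpa only [hPi] using hne
    · simpa only [hPi] using (hcompl b).symm
  have hrow : F (update (P a b') k t) ≠ F (update (P a b) k t) := by
    rw [← hPj a b b']
    refine update_update_ne_of_not_levelConn hF hj hkj.symm hdiag hsep (fun c => ?_) ?_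
    · simpa only [hPj] using hne
    · rw [hPj, hdiag]
      exact hcompl b'
  have hanti : F (P a b') = F (P a' b) :=
    eq_of_ne_of_ne (hdiag ▸ hcompl b') (hcompl b).symm
  refine hne hanti (fun hconn => hsep ?_) (eq_of_ne_of_ne hrow hcol)
  simpa only [hPj] using hconn.update_update hF hj (a := b) (b := b') (by simpa only [hPj])

theorem nonInteracting_of_not_planeConn [Finite ι] (hF : IsDoubleCode F)
    (hI : ∀ i ∈ I, ∀ k ∉ I, NonInteracting F k i) (hi : i ∈ I) (hj : j ∈ I)
    (h : ¬ PlaneConn F I i j x) : NonInteracting F i j := by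
  obtain rfl | hij := eq_or_ne i j
  · exact nonInteracting_self F i
  intro y a b b'
  have hy : ¬ PlaneConn F I i j y :=
    update_induction (P := fun z => ¬ PlaneConn F I i j z)
      (fun k _ z hz hconn => hz (hconn.of_update hF hI hi hj hij)) h
  simpa using increments_eq_of_not_planeConn hF hi hj hy a (y i) b b'

/-- All points of the line through `z` in direction `i` that have the level of `x` are connected
to `x`. -/
def LineReached (F : (ι → V4) → ZMod 2) (I : Set ι) (x : ι → V4) (i : ι) (z : ι → V4) : Prop :=
  ∀ c, F (update z i c) = F x → LevelConn F I x (update z i c)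

theorem LineReached.of_planeConn (hF : IsDoubleCode F) {z : ι → V4} (hij : i ≠ j)
    (hplane : PlaneConn F I i j z) (h : LineReached F I x i z) : LineReached F I x j z := by
  intro c hc
  obtain ⟨e, he⟩ := (hF z i).exists_eq (F x)
  have hcross := hplane e (z i) (z j) c
  rw [update_comm hij, update_eq_self, update_eq_self] at hcross
  exact (h e he).trans (hcross (he.trans hc.symm))

theorem lineReached_iff_of_mem_interactionComponent [Finite ι] (hF : IsDoubleCode F)
    (hj : j ∈ interactionComponent F i) (z : ι → V4) :
    LineReached F (interactionComponent F i) x j z ↔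
      LineReached F (interactionComponent F i) x i z := by
  induction hj with
  | refl => rfl
  | @tail j k hj hjk ih =>
    have hk : k ∈ interactionComponent F i := .tail hj hjk
    have hclosed : ∀ l ∈ interactionComponent F i, ∀ m ∉ interactionComponent F i,
        NonInteracting F m l := fun _ hl _ hm =>
      nonInteracting_of_mem_of_notMem_interactionComponent hl hm
    have hne : j ≠ k := by
      rintro rfl
      exact hjk (nonInteracting_self F j)
    rw [← ih]
    constructor
    · refine LineReached.of_planeConn hF hne.symm ?_
      by_contra h
      exact hjk (nonInteracting_of_not_planeConn hF hclosed hk hj h).symm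
    · refine LineReached.of_planeConn hF hne ?_
      by_contra h
      exact hjk (nonInteracting_of_not_planeConn hF hclosed hj hk h)

theorem levelConn_interactionComponent [Finite ι] (hF : IsDoubleCode F)
    (hxy : Set.EqOn x y (interactionComponent F i)ᶜ) (hlevel : F x = F y) :
    LevelConn F (interactionComponent F i) x y := by
  have hi : i ∈ interactionComponent F i := .refl
  have hx : LineReached F (interactionComponent F i) x i x := fun c hc => by
    simpa using levelConn_update_update (F := F) (x := x) hi (a := x i) (b := c)
      (by simpa using hc.symm)
  have hy : LineReached F (interactionComponent F i) x i y := by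
    refine update_induction (fun k hk z hz => ?_) hx
    have hkI : k ∈ interactionComponent F i := by
      by_contra hkI
      exact hk (hxy hkI)
    rw [← lineReached_iff_of_mem_interactionComponent hF hkI] at hz ⊢
    simpa only [LineReached, update_idem] using hz
  simpa using hy (y i) (by simpa using hlevel.symm)

end DoubleCode

section PairIndicator

/-- The indicator function of a set `T` of symbols, with values in `ZMod 2`. -/
def pairIndicator (T : Finset V4) (t : V4) : ZMod 2 :=
  if t ∈ T then 1 else 0

variable {T : Finset V4} {t u v : V4}

theorem pairIndicator_eq_one_iff : pairIndicator T t = 1 ↔ t ∈ T := by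
  simp [pairIndicator]

theorem pairIndicator_eq_pairIndicator_iff {S : Finset V4} :
    pairIndicator T t = pairIndicator S u ↔ (t ∈ T ↔ u ∈ S) := by
  by_cases ht : t ∈ T <;> by_cases hu : u ∈ S <;> simp [pairIndicator, ht, hu]

theorem eq_iff_ne_of_pairIndicator_eq (hT : T.card = 2)
    (htu : pairIndicator T t = pairIndicator T u) (huv : pairIndicator T u = pairIndicator T v)
    (hne : u ≠ v) : t = v ↔ t ≠ u := by
  rw [pairIndicator_eq_pairIndicator_iff] at htu huv
  revert T t u v
  decide

theorem eq_of_pairIndicator_eq (hT : T.card = 2)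
    (htu : pairIndicator T t = pairIndicator T u) (huv : pairIndicator T u = pairIndicator T v)
    (h : t = v ↔ u = v) : t = u := by
  obtain rfl | hne := eq_or_ne u v
  · exact h.2 rfl
  · by_contra htu'
    exact hne (h.1 ((eq_iff_ne_of_pairIndicator_eq hT htu huv hne).2 htu'))

/-- Each step along a level path switches between the two symbols of the level, so the equality of
the end values is the parity of the number of steps. -/
theorem LevelConn.eq_iff_eq {ι : Type*} [DecidableEq ι] {I : Set ι} {f g : (ι → V4) → V4}
    {x y : ι → V4} (hT : T.card = 2)
    (hf : ∀ z, ∀ i ∈ I, Injective fun c => f (update z i c))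
    (hg : ∀ z, ∀ i ∈ I, Injective fun c => g (update z i c))
    (hfg : ∀ z, ∀ i ∈ I, ∀ c, pairIndicator T (f z) = pairIndicator T (f (update z i c)) →
      pairIndicator T (g z) = pairIndicator T (g (update z i c)))
    (h : LevelConn (fun z => pairIndicator T (f z)) I x y) : f x = f y ↔ g x = g y := by
  suffices (pairIndicator T (f x) = pairIndicator T (f y) ∧
      pairIndicator T (g x) = pairIndicator T (g y)) ∧ (f x = f y ↔ g x = g y) from this.2
  induction h with
  | refl => simp
  | @tail y _ _ hstep ih =>
    obtain ⟨hfstep, i, hi, c, rfl⟩ := hstep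
    obtain ⟨⟨hfxy, hgxy⟩, hiff⟩ := ih
    have hgstep := hfg y i hi c hfstep
    refine ⟨⟨hfxy.trans hfstep, hgxy.trans hgstep⟩, ?_⟩
    obtain rfl | hc := eq_or_ne c (y i)
    · rwa [update_eq_self]
    have hfne : f y ≠ f (update y i c) := fun h =>
      hc (hf y i hi (by simpa only [update_eq_self] using h)).symm
    have hgne : g y ≠ g (update y i c) := fun h =>
      hc (hg y i hi (by simpa only [update_eq_self] using h)).symm
    rw [eq_iff_ne_of_pairIndicator_eq hT hfxy hfstep hfne,
      eq_iff_ne_of_pairIndicator_eq hT hgxy hgstep hgne, ne_eq, hiff]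

end PairIndicator

section Parastrophe

variable {n : ℕ} {q : (Fin n → V4) → V4} {l : Fin n} {w : Fin n → V4} {t : V4}

theorem IsNQuasigroup.bijective_update (hq : IsNQuasigroup q) (x : Fin n → V4) (i : Fin n) :
    Bijective fun t => q (update x i t) :=
  (bijective_iff_existsUnique _).2 (hq x i)

theorem IsNQuasigroup.isDoubleCode (hq : IsNQuasigroup q) {T : Finset V4} (hT : T.card = 2) :
    IsDoubleCode fun x => pairIndicator T (q x) := by
  intro x i
  simp only [IsBalanced, pairIndicator_eq_one_iff]
  refine Eq.trans ?_ hT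
  exact Finset.card_bij (fun t _ => q (update x i t)) (by simp)
    (fun _ _ _ _ h => (hq.bijective_update x i).1 h) fun s hs => by
      obtain ⟨t, rfl⟩ := (hq.bijective_update x i).2 s
      exact ⟨t, by simpa using hs, rfl⟩

/-- The parastrophe of `q` exchanging the value with the argument of index `l`: its value at `w`
is the solution `t` of `q (w₁, …, t, …, wₙ) = w l`, where `t` stands at position `l`. -/
noncomputable def parastrophe (q : (Fin n → V4) → V4) (l : Fin n) (w : Fin n → V4) : V4 :=
  invFun (fun t => q (update w l t)) (w l)

theorem parastrophe_eq_iff (hq : IsNQuasigroup q) :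
    parastrophe q l w = t ↔ q (update w l t) = w l := by
  constructor
  · rintro rfl
    exact invFun_eq ((hq.bijective_update w l).2 _)
  · intro h
    rw [parastrophe, ← h]
    exact leftInverse_invFun (hq.bijective_update w l).1 t

theorem parastrophe_update_eq_iff (hq : IsNQuasigroup q) :
    parastrophe q l (update w l t) = w l ↔ q w = t := by
  rw [parastrophe_eq_iff hq, update_idem, update_eq_self, update_self]

theorem IsNQuasigroup.parastrophe (hq : IsNQuasigroup q) (l : Fin n) :
    IsNQuasigroup (parastrophe q l) := by
  intro w i t
  simp only [parastrophe_eq_iff hq]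
  obtain rfl | hi := eq_or_ne i l
  · simp
  · simpa only [update_comm hi, update_of_ne hi.symm] using hq (update w l t) i (w l)

theorem eq_of_parastrophe_eq {f : (Fin n → V4) → V4} (hf : IsNQuasigroup f)
    (hq : IsNQuasigroup q) (h : parastrophe f l = parastrophe q l) : f = q := by
  funext w
  rw [← parastrophe_update_eq_iff hf (l := l), h, parastrophe_update_eq_iff hq]

end Parastrophe

section Extensions

variable {n : ℕ} {f g q : (Fin n → V4) → V4} {l : Fin n} {T : Finset V4}

/-- `f` is an `n`-quasigroup that extends the restriction of `q` to the points whose coordinate of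
index `l` does not belong to `T`. -/
def IsExtension (q : (Fin n → V4) → V4) (l : Fin n) (T : Finset V4) (f : (Fin n → V4) → V4) :
    Prop :=
  IsNQuasigroup f ∧ ∀ x : Fin n → V4, x l ∉ T → f x = q x

theorem IsExtension.parastrophe_eq_iff (hf : IsExtension q l T f) (hq : IsNQuasigroup q)
    {s : V4} (hs : s ∉ T) (w : Fin n → V4) : parastrophe f l w = s ↔ parastrophe q l w = s := by
  rw [_root_.parastrophe_eq_iff hf.1, _root_.parastrophe_eq_iff hq, hf.2 _ (by simpa using hs)]

theorem IsExtension.pairIndicator_parastrophe (hf : IsExtension q l T f) (hq : IsNQuasigroup q)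
    (w : Fin n → V4) :
    pairIndicator T (parastrophe f l w) = pairIndicator T (parastrophe q l w) := by
  rw [pairIndicator_eq_pairIndicator_iff, ← not_iff_not]
  constructor <;> intro hw
  · rwa [(hf.parastrophe_eq_iff hq hw w).1 rfl]
  · rwa [(hf.parastrophe_eq_iff hq hw w).2 rfl]

theorem IsExtension.eq_of_parastrophe_apply_eq (hf : IsExtension q l T f)
    (hg : IsExtension q l T g) (hq : IsNQuasigroup q) (hT : T.card = 2)
    (hconn : ∀ x y, pairIndicator T (parastrophe q l x) = pairIndicator T (parastrophe q l y) →
      LevelConn (fun w => pairIndicator T (parastrophe q l w)) Set.univ x y)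
    {z : Fin n → V4} (hz : parastrophe q l z ∈ T) (hfg : parastrophe f l z = parastrophe g l z) :
    f = g := by
  have hlevel_f := hf.pairIndicator_parastrophe hq
  have hlevel_g := hg.pairIndicator_parastrophe hq
  refine eq_of_parastrophe_eq hf.1 hg.1 (l := l) (funext fun w => ?_)
  by_cases hw : parastrophe q l w ∈ T
  · have hwz : pairIndicator T (parastrophe q l w) = pairIndicator T (parastrophe q l z) :=
      pairIndicator_eq_pairIndicator_iff.2 (by simp [hw, hz])
    have hpath := hconn w z hwz
    simp only [← hlevel_f] at hpath
    have hparity := hpath.eq_iff_eq (g := parastrophe g l) hT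
      (fun x i _ => ((hf.1.parastrophe l).bijective_update x i).1)
      (fun x i _ => ((hg.1.parastrophe l).bijective_update x i).1)
      (fun x i _ c => by simp only [hlevel_f, hlevel_g, imp_self])
    refine eq_of_pairIndicator_eq hT ?_ ?_ (hfg ▸ hparity)
    · rw [hlevel_f, hlevel_g]
    · rw [hlevel_g, hlevel_g, hwz]
  · rw [(hf.parastrophe_eq_iff hq hw w).2 rfl, (hg.parastrophe_eq_iff hq hw w).2 rfl]

theorem card_isExtension_le_two (hq : IsNQuasigroup q) (hT : T.card = 2)
    (hconn : ∀ x y, pairIndicator T (parastrophe q l x) = pairIndicator T (parastrophe q l y) →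
      LevelConn (fun w => pairIndicator T (parastrophe q l w)) Set.univ x y) :
    Nat.card {f // IsExtension q l T f} ≤ 2 := by
  obtain ⟨t, ht⟩ := ((hq.parastrophe l).isDoubleCode hT 0 l).exists_eq 1
  set z : Fin n → V4 := update 0 l t
  have hz : parastrophe q l z ∈ T := pairIndicator_eq_one_iff.1 ht
  let valueAt (f : {f // IsExtension q l T f}) : T :=
    ⟨parastrophe f.1 l z, pairIndicator_eq_one_iff.1
      ((f.2.pairIndicator_parastrophe hq z).trans ht)⟩
  have hinj : Injective valueAt := fun f g hfg => Subtype.ext <|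
    f.2.eq_of_parastrophe_apply_eq g.2 hq hT hconn hz (congrArg Subtype.val hfg)
  simpa [hT] using Nat.card_le_card_of_injective valueAt hinj

end Extensions

section Semilinear

theorem IsDoubleCode.exists_eq_sum {ι : Type*} [Fintype ι] [DecidableEq ι] [Nonempty ι]
    {F : (ι → V4) → ZMod 2} (hF : IsDoubleCode F) (h : ∀ i j, NonInteracting F i j) :
    ∃ S : ι → Finset V4, (∀ i, (S i).card = 2) ∧ ∀ x, F x = ∑ i, pairIndicator (S i) (x i) := by
  obtain ⟨t, ht⟩ := (hF 0 (Classical.arbitrary ι)).exists_eq 0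
  set z : ι → V4 := update 0 (Classical.arbitrary ι) t
  refine ⟨fun i => Finset.univ.filter fun c => F (update z i c) = 1, hF z, fun x => ?_⟩
  have hbit : ∀ v : ZMod 2, v = if v = 1 then 1 else 0 := by decide
  simpa [pairIndicator, ht, ← hbit] using eq_add_sum_of_nonInteracting h x z

theorem isSemilinear_of_parastrophe_eq_sum {n : ℕ} {q : (Fin n → V4) → V4} {l : Fin n}
    {T : Finset V4} {S : Fin n → Finset V4} (hq : IsNQuasigroup q) (hT : T.card = 2)
    (hS : ∀ i, (S i).card = 2)
    (h : ∀ w, pairIndicator T (parastrophe q l w) = ∑ i, pairIndicator (S i) (w i)) :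
    IsSemilinear q := by
  obtain ⟨a, b, hab, hSl⟩ := Finset.card_eq_two.1 (hS l)
  refine ⟨a, b, hab, update S l T, fun i => ?_, fun x => ?_⟩
  · obtain rfl | hi := eq_or_ne i l
    · simpa using hT
    · simpa [hi] using hS i
  have hx := h (update x l (q x))
  rw [(parastrophe_update_eq_iff hq).2 rfl, Fintype.sum_eq_add_sum_compl l, update_self] at hx
  have hrest : ∑ i ∈ {l}ᶜ, pairIndicator (update S l T i) (x i) =
      ∑ i ∈ {l}ᶜ, pairIndicator (S i) (update x l (q x) i) :=
    Finset.sum_congr rfl fun i hi => by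
      rw [update_of_ne (by simpa using hi), update_of_ne (by simpa using hi)]
  have hsum : ∑ i, pairIndicator (update S l T i) (x i) = pairIndicator (S l) (q x) := by
    rw [Fintype.sum_eq_add_sum_compl l, update_self, hrest, hx, add_assoc,
      CharTwo.add_self_eq_zero, add_zero]
  change q x = a ∨ q x = b ↔ ∑ i, pairIndicator (update S l T i) (x i) = 1
  rw [hsum, pairIndicator_eq_one_iff, hSl, Finset.mem_insert, Finset.mem_singleton]

end Semilinear

section Autonomous

/-- Whether a change of the arguments indexed by `D` preserves the value of `f` does not depend on
the remaining arguments; for quasigroups this says that the arguments in `D` can be grouped into an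
inner quasigroup. -/
def IsAutonomous {ι α β : Type*} (f : (ι → α) → β) (D : Set ι) : Prop :=
  ∀ ⦃x y x' y' : ι → α⦄, Set.EqOn x y Dᶜ → Set.EqOn x' y' Dᶜ → Set.EqOn x x' D →
    Set.EqOn y y' D → f x = f y → f x' = f y'

variable {n : ℕ} {q : (Fin n → V4) → V4} {l : Fin n} {D : Set (Fin n)}

open scoped Classical in
theorem IsNQuasigroup.isAutonomous_interactionComponent (hq : IsNQuasigroup q) {T : Finset V4}
    (hT : T.card = 2) (i : Fin n) :
    IsAutonomous q (interactionComponent (fun x => pairIndicator T (q x)) i) := by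
  intro x y x' y' hxy hxy' hxx' hyy' hqxy
  set F : (Fin n → V4) → ZMod 2 := fun x => pairIndicator T (q x) with hF
  set I : Set (Fin n) := interactionComponent F i
  have hline {k : Fin n} (hk : k ∈ I) (z : Fin n → V4) :
      Injective fun c => q (I.piecewise (update z k c) x') := by
    simpa only [piecewise_update_of_mem hk] using (hq.bijective_update (I.piecewise z x') k).1
  have hpath : LevelConn F I x y :=
    levelConn_interactionComponent (hq.isDoubleCode hT) hxy (by simp only [hF, hqxy])
  have hparity := hpath.eq_iff_eq (g := fun z => q (I.piecewise z x')) hT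
    (fun z k _ => (hq.bijective_update z k).1)
    (fun z k hk => hline hk z)
    (fun z k hk c hz => apply_piecewise_eq_of_mem_interactionComponent hk hz x')
  have hpiecewise {z z' : Fin n → V4} (hz : Set.EqOn z z' I) (hz' : Set.EqOn x' z' Iᶜ) :
      I.piecewise z x' = z' := by
    rw [← Set.eqOn_univ, Set.eqOn_piecewise]
    exact ⟨hz.mono Set.inter_subset_right, hz'.mono Set.inter_subset_right⟩
  simpa only [hpiecewise hxx' fun _ _ => rfl, hpiecewise hyy' hxy'] using hparity.1 hqxy

theorem IsAutonomous.of_parastrophe_of_notMem (hq : IsNQuasigroup q) (hl : l ∉ D)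
    (h : IsAutonomous (parastrophe q l) D) : IsAutonomous q D := by
  intro x y x' y' hxy hxy' hxx' hyy' hqxy
  have hDl {z z' : Fin n → V4} (s s' : V4) (hz : Set.EqOn z z' D) :
      Set.EqOn (update z l s) (update z' l s') D := fun k hk => by
    have hkl : k ≠ l := fun hkl => hl (hkl ▸ hk)
    simpa [hkl] using hz hk
  have hDcl {z z' : Fin n → V4} (s : V4) (hz : Set.EqOn z z' Dᶜ) :
      Set.EqOn (update z l s) (update z' l s) Dᶜ := fun k hk => by
    obtain rfl | hkl := eq_or_ne k l
    · simp
    · simpa [hkl] using hz hk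
  have hp : parastrophe q l (update x l (q x)) = parastrophe q l (update y l (q x)) := by
    rw [(parastrophe_update_eq_iff hq).2 rfl, hqxy, (parastrophe_update_eq_iff hq).2 rfl, hxy hl]
  have hp' := h (hDcl _ hxy) (hDcl _ hxy') (hDl _ (q x') hxx') (hDl _ _ hyy') hp
  rw [(parastrophe_update_eq_iff hq).2 rfl, hxy' hl] at hp'
  exact ((parastrophe_update_eq_iff hq).1 hp'.symm).symm

theorem IsAutonomous.of_parastrophe_of_mem (hq : IsNQuasigroup q) (hl : l ∈ D)
    (h : IsAutonomous (parastrophe q l) D) : IsAutonomous q (insert l Dᶜ) := by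
  intro x y x' y' hxy hxy' hxx' hyy' hqxy
  have hDc {z z' : Fin n → V4} (s s' : V4) (hz : Set.EqOn z z' (insert l Dᶜ)) :
      Set.EqOn (update z l s) (update z' l s') Dᶜ := fun k hk => by
    have hkl : k ≠ l := fun hkl => hk (hkl ▸ hl)
    simpa [hkl] using hz (.inr hk)
  have hD {z z' : Fin n → V4} (s : V4) (hz : Set.EqOn z z' (insert l Dᶜ)ᶜ) :
      Set.EqOn (update z l s) (update z' l s) D := fun k hk => by
    obtain rfl | hkl := eq_or_ne k l
    · simp
    · simpa [hkl] using hz (by simp [hkl, hk])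
  have hmem : l ∈ insert l Dᶜ := Set.mem_insert ..
  have hp : parastrophe q l (update x l (q x)) = parastrophe q l (update x' l (q x')) := by
    rw [(parastrophe_update_eq_iff hq).2 rfl, (parastrophe_update_eq_iff hq).2 rfl, hxx' hmem]
  have hp' := h (hDc _ _ hxx') (hDc _ (q x') hyy') (hD _ hxy) (hD _ hxy') hp
  rw [(parastrophe_update_eq_iff hq).2 hqxy.symm, hyy' hmem] at hp'
  exact ((parastrophe_update_eq_iff hq).1 hp'.symm).symm

theorem exists_isAutonomous_of_parastrophe (hq : IsNQuasigroup q) (hD : D.Nontrivial)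
    (hDu : D ≠ Set.univ) (h : IsAutonomous (parastrophe q l) D) :
    ∃ E : Set (Fin n), E.Nontrivial ∧ E ≠ Set.univ ∧ IsAutonomous q E := by
  by_cases hl : l ∈ D
  · refine ⟨insert l Dᶜ, ?_, ?_, h.of_parastrophe_of_mem hq hl⟩
    · obtain ⟨k, hk⟩ := (Set.ne_univ_iff_exists_notMem D).1 hDu
      exact ⟨l, .inl rfl, k, .inr hk, fun hlk => hk (hlk ▸ hl)⟩
    · obtain ⟨k, hk, hkl⟩ := hD.exists_ne l
      exact (Set.ne_univ_iff_exists_notMem _).2 ⟨k, by simp [hk, hkl]⟩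
  · exact ⟨D, hD, hDu, h.of_parastrophe_of_notMem hq hl⟩

end Autonomous

section Decomposition

variable {n m k : ℕ} {q : (Fin n → V4) → V4}

theorem IsNQuasigroup.comp_elim (hq : IsNQuasigroup q) (e : Fin m ⊕ Fin k ≃ Fin n)
    (z : Fin k → V4) : IsNQuasigroup fun y => q (Sum.elim y z ∘ e.symm) := by
  intro y j b
  simpa only [← Sum.update_elim_inl, update_comp_equiv] using hq (Sum.elim y z ∘ e.symm) _ b

theorem IsNQuasigroup.comp_elim_update_tail (hq : IsNQuasigroup q) (e : Fin m ⊕ Fin k ≃ Fin n)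
    (y : Fin m → V4) (j : Fin m) {ρ : V4 → V4} (hρ : Bijective ρ) :
    IsNQuasigroup fun w : Fin (k + 1) → V4 =>
      q (Sum.elim (update y j (ρ (w 0))) (Fin.tail w) ∘ e.symm) := by
  intro w i
  rw [← bijective_iff_existsUnique]
  refine Fin.cases ?_ (fun i => ?_) i
  · simp only [update_self, Fin.tail_update_zero]
    exact ((hq.comp_elim e (Fin.tail w)).bijective_update y j).comp hρ
  · simpa only [Fin.tail_update_succ, ← Sum.update_elim_inr, update_comp_equiv, Equiv.symm_symm,
      update_of_ne (Fin.succ_ne_zero i).symm] using hq.bijective_update _ (e (.inr i))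

/-- The inner quasigroup is `q` with the arguments outside `D` fixed; the outer one evaluates `q`
at a representative of the given value of the inner one. -/
theorem IsAutonomous.exists_eq_comp {D : Set (Fin n)} (hD : IsAutonomous q D)
    (hq : IsNQuasigroup q) (e : Fin m ⊕ Fin k ≃ Fin n) (j₀ : Fin m)
    (hinl : ∀ j, e (.inl j) ∈ D) (hinr : ∀ j, e (.inr j) ∉ D) :
    ∃ (h : (Fin (k + 1) → V4) → V4) (g : (Fin m → V4) → V4), IsNQuasigroup h ∧ IsNQuasigroup g ∧
      ∀ x, q x = h (Fin.cons (g fun j => x (e (.inl j))) fun j => x (e (.inr j))) := by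
  set g : (Fin m → V4) → V4 := fun y => q (Sum.elim y 0 ∘ e.symm)
  have hgq : IsNQuasigroup g := hq.comp_elim e 0
  set ρ : V4 → V4 := fun t => parastrophe g j₀ (update 0 j₀ t)
  have hgρ (t : V4) : g (update 0 j₀ (ρ t)) = t := by
    simpa using (parastrophe_eq_iff hgq (l := j₀) (w := update 0 j₀ t)).1 rfl
  refine ⟨_, g, hq.comp_elim_update_tail e 0 j₀ ((hgq.parastrophe j₀).bijective_update 0 j₀), hgq,
    fun x => ?_⟩
  have hoff (y y' : Fin m → V4) (z : Fin k → V4) :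
      Set.EqOn (Sum.elim y z ∘ e.symm) (Sum.elim y' z ∘ e.symm) Dᶜ := by
    intro i hi
    obtain ⟨j | j, rfl⟩ := e.surjective i
    · exact absurd (hinl j) hi
    · simp
  have hon (y : Fin m → V4) (z z' : Fin k → V4) :
      Set.EqOn (Sum.elim y z ∘ e.symm) (Sum.elim y z' ∘ e.symm) D := by
    intro i hi
    obtain ⟨j | j, rfl⟩ := e.surjective i
    · simp
    · exact absurd hi (hinr j)
  have hx : x = Sum.elim (fun j => x (e (.inl j))) (fun j => x (e (.inr j))) ∘ e.symm := by
    rw [Equiv.eq_comp_symm]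
    exact (Sum.elim_comp_inl_inr _).symm
  conv_lhs => rw [hx]
  exact hD (hoff _ _ 0) (hoff _ _ _) (hon ..) (hon ..) (hgρ _).symm

theorem IsAutonomous.isDecomposable {D : Set (Fin n)} (hD : IsAutonomous q D)
    (hq : IsNQuasigroup q) (hnontriv : D.Nontrivial) (hDu : D ≠ Set.univ) :
    IsDecomposable q := by
  classical
  have htwo : 2 ≤ D.toFinset.card := by
    rwa [Nat.succ_le_iff, Finset.one_lt_card_iff_nontrivial, Set.toFinset_nontrivial]
  have hlt : D.toFinset.card < n := by
    simpa using (Finset.card_lt_iff_ne_univ D.toFinset).2 (by simpa using hDu)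
  have hcompl : D.toFinsetᶜ.card = n - D.toFinset.card := by
    rw [Finset.card_compl, Fintype.card_fin]
  let e := finSumEquivOfFinset rfl hcompl
  have hinl (j : Fin D.toFinset.card) : e (.inl j) ∈ D :=
    Set.mem_toFinset.1 (Finset.orderEmbOfFin_mem _ rfl j)
  have hinr (j : Fin (n - D.toFinset.card)) : e (.inr j) ∉ D := fun hj =>
    Finset.mem_compl.1 (Finset.orderEmbOfFin_mem _ hcompl j) (Set.mem_toFinset.2 hj)
  obtain ⟨h, g, hh, hg, hfactor⟩ := hD.exists_eq_comp hq e ⟨0, by omega⟩ hinl hinr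
  have hn : n = D.toFinset.card + (n - D.toFinset.card) := by omega
  refine ⟨_, htwo, hlt, h, g, (finCongr hn).trans (finSumFinEquiv.symm.trans e), hh, hg,
    fun x => ?_⟩
  have hσ_inl (j : Fin D.toFinset.card) :
      finSumFinEquiv.symm (finCongr hn (⟨j, j.2.trans hlt⟩ : Fin n)) = .inl j :=
    finSumFinEquiv_symm_apply_castAdd j
  have hσ_inr (j : Fin (n - D.toFinset.card)) :
      finSumFinEquiv.symm (finCongr hn (⟨D.toFinset.card + j, by omega⟩ : Fin n)) =
        .inr j :=
    finSumFinEquiv_symm_apply_natAdd j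
  simpa only [Equiv.trans_apply, hσ_inl, hσ_inr] using hfactor x

end Decomposition

theorem card_pair_and_notMem_pair_iff {a b c d : V4}
    (h : ({a, b, c, d} : Set V4) = Set.univ) :
    ({c, d} : Finset V4).card = 2 ∧ ∀ x, (x = a ∨ x = b) ↔ x ∉ ({c, d} : Finset V4) := by
  simp only [Set.eq_univ_iff_forall, Set.mem_insert_iff, Set.mem_singleton_iff] at h
  revert a b c d
  decide

/-- Corollary 3: let `{a,b,c,d} = Σ` and let `q` be an `(n+1)`-quasigroup
(`n + 1 ≥ 3`). If the restriction of `q` to the points whose last coordinate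
lies in `{a,b}` has more than two extensions to an `(n+1)`-quasigroup, then
`q` is semilinear or decomposable. -/
theorem more_than_two_extensions (n : ℕ) (hn : 3 ≤ n + 1)
    (a b c d : V4) (habcd : ({a, b, c, d} : Set V4) = Set.univ)
    (q : (Fin (n + 1) → V4) → V4) (hq : IsNQuasigroup q)
    (hext : 2 < Nat.card {f : (Fin (n + 1) → V4) → V4 //
        IsNQuasigroup f ∧
        ∀ x : Fin (n + 1) → V4,
          (x (Fin.last n) = a ∨ x (Fin.last n) = b) → f x = q x}) :
    IsSemilinear q ∨ IsDecomposable q := by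
  obtain ⟨hT, hab⟩ := card_pair_and_notMem_pair_iff habcd
  simp only [hab] at hext
  set T : Finset V4 := {c, d}
  have hp := hq.parastrophe (Fin.last n)
  have hF := hp.isDoubleCode hT
  set F := fun w => pairIndicator T (parastrophe q (Fin.last n) w)
  by_cases hlinear : ∀ i j, NonInteracting F i j
  · obtain ⟨S, hS, hsum⟩ := hF.exists_eq_sum hlinear
    exact .inl (isSemilinear_of_parastrophe_eq_sum hq hT hS hsum)
  push Not at hlinear
  obtain ⟨i, j, hij⟩ := hlinear
  have hnontrivial : (interactionComponent F i).Nontrivial :=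
    ⟨i, .refl, j, .single hij, fun h => hij (h ▸ nonInteracting_self F i)⟩
  have hne_univ : interactionComponent F i ≠ Set.univ := fun huniv =>
    hext.not_ge <| card_isExtension_le_two hq hT fun x y hxy => by
      rw [← huniv]
      exact levelConn_interactionComponent (F := F) (i := i) hF (by simp [huniv]) hxy
  obtain ⟨D, hD, hDu, hauto⟩ := exists_isAutonomous_of_parastrophe hq hnontrivial hne_univ
    (hp.isAutonomous_interactionComponent hT i)
  exact .inr (hauto.isDecomposable hq hD hDu)
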